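/- Let d, n, K be positive integers. Let (Ω, F, ℙ) be a probability space with a filtration (F_k)_{k≥0}. Let X ⊆ ℝ^d be a closed convex set with 0 ∈ X, and ψ : ℝ^d → ℝ 1-strongly convex on X with respect to the Euclidean norm, with ψ ≥ 0 on X and ψ(0) = 0. Let f_1, …, f_n : ℝ^d → ℝ be convex and L-Lipschitz on X with respect to the Euclidean norm, and f = (1/n) Σ_i f_i. Let η(0) ≥ η(1) ≥ … ≥ η(K) > 0 be nonincreasing, and for each k ∈ {1,…,K} let W(k) be a (deterministic) n×n doubly stochastic matrix. Let z_i(k), ĝ_i(k) be random vectors in ℝ^d with z_i(1) = 0, ĝ_i(k) F_k-measurable, and z_i(k+1) = Σ_{j=1}^n W(k)_{ij} z_j(k) + ĝ_i(k); set z̄(k) = (1/n) Σ_j z_j(k). For each k and i let x_i(k) ∈ X be the minimizer over X of x ↦ ⟨z_i(k), x⟩ + ψ(x)/η(k), and y(k) ∈ X the minimizer of x ↦ ⟨z̄(k), x⟩ + ψ(x)/η(k). Suppose there is ξ > 0 such that almost surely, for all i and k: E[ĝ_i(k) | F_{k-1}] is a subgradient of f_i at x_i(k) (i.e., for all w ∈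 X, f_i(w) ≥ f_i(x_i(k)) + ⟨E[ĝ_i(k)|F_{k-1}], w - x_i(k)⟩), and E[‖ĝ_i(k)‖₂² | F_{k-1}] ≤ ξ². Then for every x* ∈ X and every i ∈ {1,…,n}, with x̂_i(K) = (1/K) Σ_{k=1}^K x_i(k): E[f(x̂_i(K))] - f(x*) ≤ ψ(x*)/(K η(K)) + (ξ²/(2K)) Σ_{k=1}^K η(k-1) + ((L + ξ)/(nK)) Σ_{k=1}^K Σ_{j=1}^n η(k) E‖z̄(k) - z_j(k)‖₂ + (L/K) Σ_{k=1}^K η(k) E‖z̄(k) - z_i(k)‖₂. -/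

import Mathlib

open MeasureTheory Finset Matrix
open scoped RealInnerProductSpace

lemma aux_strong {E : Type*} [NormedAddCommGroup E] [InnerProductSpace ℝ E]
    {X : Set E} {ψ : E → ℝ} (hψ : StrongConvexOn X 1 ψ) {η : ℝ} (hη : 0 < η) {z y : E}
    (hy : y ∈ X) (hmin : ∀ w ∈ X, ⟪z, y⟫ + ψ y / η ≤ ⟪z, w⟫ + ψ w / η) :
    ∀ w ∈ X, ⟪z, y⟫ + ψ y / η + ‖w - y‖ ^ 2 / (2 * η) ≤ ⟪z, w⟫ + ψ w / η := by
  intro w hw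
  have key : ∀ t : ℝ, 0 < t → t < 1 →
      ⟪z, y⟫ + ψ y / η + (1 - t) * (‖w - y‖ ^ 2 / (2 * η)) ≤ ⟪z, w⟫ + ψ w / η := by
    intro t ht0 ht1
    have h1 := hψ.2 hy hw (sub_nonneg.2 ht1.le) ht0.le (by ring)
    have h2 := hmin _ (hψ.1 hy hw (sub_nonneg.2 ht1.le) ht0.le (by ring))
    have h3 : ψ ((1 - t) • y + t • w) / η ≤
      ((1 - t) * ψ y + t * ψ w - (1 - t) * t * (1 / 2 * ‖w - y‖ ^ 2)) / η := by
      gcongr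
      simpa [norm_sub_rev y w] using h1
    rw [inner_add_right, inner_smul_right, inner_smul_right] at h2
    have h4 : ((1 - t) * ψ y + t * ψ w - (1 - t) * t * (1 / 2 * ‖w - y‖ ^ 2)) / η
      = (1 - t) * (ψ y / η) + t * (ψ w / η) - (1 - t) * t * (‖w - y‖ ^ 2 / (2 * η)) := by
      field_simp
    rw [h4] at h3
    refine le_of_mul_le_mul_left ?_ ht0
    linarith
  have hlim : Filter.Tendsto (fun t : ℝ => ⟪z, y⟫ + ψ y / η + (1 - t) * (‖w - y‖ ^ 2 / (2 * η)))
      (nhdsWithin 0 (Set.Ioi 0)) (nhds (⟪z, y⟫ + ψ y / η + (1 - 0) * (‖w - y‖ ^ 2 / (2 * η)))) := by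
    apply Filter.Tendsto.mono_left _ nhdsWithin_le_nhds
    apply Continuous.tendsto (f := fun t : ℝ => ⟪z, y⟫ + ψ y / η + (1 - t) * (‖w - y‖ ^ 2 / (2 * η)))
    fun_prop
  have := le_of_tendsto hlim (b := ⟪z, w⟫ + ψ w / η) (by
    filter_upwards [Ioo_mem_nhdsGT (zero_lt_one (α := ℝ))] with t ht using key t ht.1 ht.2)
  simpa using this

lemma aux_lip {E : Type*} [NormedAddCommGroup E] [InnerProductSpace ℝ E]
    {X : Set E} {ψ : E → ℝ} (hψ : StrongConvexOn X 1 ψ) {η : ℝ} (hη : 0 < η) {z y z' y' : E}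
    (hy : y ∈ X) (hmin : ∀ w ∈ X, ⟪z, y⟫ + ψ y / η ≤ ⟪z, w⟫ + ψ w / η)
    (hy' : y' ∈ X) (hmin' : ∀ w ∈ X, ⟪z', y'⟫ + ψ y' / η ≤ ⟪z', w⟫ + ψ w / η) :
    ‖y - y'‖ ≤ η * ‖z - z'‖ := by
  have h1 := aux_strong hψ hη hy hmin y' hy'
  have h2 := aux_strong hψ hη hy' hmin' y hy
  rw [norm_sub_rev y' y] at h1
  have h3 : ⟪z - z', y' - y⟫ ≤ ‖z - z'‖ * ‖y - y'‖ := by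
    rw [norm_sub_rev y y']; exact real_inner_le_norm _ _
  have h4 : ⟪z - z', y' - y⟫ = ⟪z, y'⟫ - ⟪z, y⟫ - ⟪z', y'⟫ + ⟪z', y⟫ := by
    simp only [inner_sub_left, inner_sub_right]; ring
  have h5 : ‖y - y'‖ ^ 2 / (2 * η) + ‖y - y'‖ ^ 2 / (2 * η) = ‖y - y'‖ ^ 2 / η := by
    field_simp; norm_num
  have h6 : ‖y - y'‖ ^ 2 / η ≤ ‖z - z'‖ * ‖y - y'‖ := by linarith
  rw [div_le_iff₀ hη] at h6
  rcases (norm_nonneg (y - y')).eq_or_lt with h | h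
  · rw [← h]; positivity
  · refine le_of_mul_le_mul_right ?_ h
    nlinarith

/-- A Lipschitz function of a measurable random vector is measurable. -/
lemma aux_meas {Ω E E' : Type*} {m : MeasurableSpace Ω} [NormedAddCommGroup E]
    [NormedAddCommGroup E'] [NormedSpace ℝ E'] [FiniteDimensional ℝ E']
    {v : Ω → E} {u : Ω → E'} (C : ℝ) 
    (h : ∀ a b, ‖u a - u b‖ ≤ C * ‖v a - v b‖) (hv : StronglyMeasurable[m] v) :
    StronglyMeasurable[m] u := by
  classical
  set φ : E → E' := fun e => if h : ∃ a, v a = e then u h.choose else 0 with hφ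
  have hφv : ∀ a, φ (v a) = u a := by
    intro a
    have hex : ∃ b, v b = v a := ⟨a, rfl⟩
    have h1 : φ (v a) = u hex.choose := by simp only [hφ]; rw [dif_pos hex]
    rw [h1]
    have := h hex.choose a
    rw [hex.choose_spec] at this
    simpa [sub_eq_zero] using this
  have hL : LipschitzOnWith (Real.toNNReal C) φ (Set.range v) := by
    apply LipschitzOnWith.of_dist_le_mul
    rintro _ ⟨a, rfl⟩ _ ⟨b, rfl⟩
    rw [hφv, hφv, dist_eq_norm, dist_eq_norm]
    refine (h a b).trans ?_
    gcongr
    exact Real.le_coe_toNNReal C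
  obtain ⟨g, hg, hgeq⟩ := hL.extend_finite_dimension
  have : u = fun a => g (v a) := by
    funext a
    rw [← hgeq ⟨a, rfl⟩, hφv]
  rw [this]
  exact hg.continuous.comp_stronglyMeasurable hv

lemma aux_memLp {Ω E E' : Type*} {m0 : MeasurableSpace Ω} {μ : Measure Ω} [IsProbabilityMeasure μ]
    [NormedAddCommGroup E]
    [NormedAddCommGroup E'] [NormedSpace ℝ E'] [FiniteDimensional ℝ E']
    {v : Ω → E} {u : Ω → E'} (C : ℝ)
    (h : ∀ a b, ‖u a - u b‖ ≤ C * ‖v a - v b‖) (hv : StronglyMeasurable v) (hv2 : MemLp v 2 μ) :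
    MemLp u 2 μ := by
  obtain ⟨a⟩ : Nonempty Ω := nonempty_of_isProbabilityMeasure μ
  have h1 : MemLp (fun b => u b - u a) 2 μ := by
    refine MemLp.of_le_mul (g := fun b => v b - v a) (c := C) (hv2.sub (memLp_const _)) ?_ ?_
    · exact ((aux_meas C h hv).sub stronglyMeasurable_const).aestronglyMeasurable
    · exact ae_of_all _ fun b => h b a
  have h2 : u = fun b => (u b - u a) + u a := by funext b; simp
  rw [h2]
  exact h1.add (memLp_const _)

lemma aux_inner_int {Ω E : Type*} {m0 : MeasurableSpace Ω} {μ : Measure Ω}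
    [NormedAddCommGroup E] [InnerProductSpace ℝ E] 
    {u v : Ω → E} (hu : MemLp u 2 μ) (hv : MemLp v 2 μ) :
    Integrable (fun ω => ⟪u ω, v ω⟫) μ := by
  have h := MemLp.integrable_mul (p := 2) (q := 2) hu.norm hv.norm
  refine h.mono (hu.1.inner hv.1) (ae_of_all _ fun ω => ?_)
  simpa using norm_inner_le_norm (𝕜 := ℝ) (u ω) (v ω)

lemma aux_pull {Ω E : Type*} {m m0 : MeasurableSpace Ω} (hm : m ≤ m0) {μ : Measure Ω}
    [IsProbabilityMeasure μ]
    [NormedAddCommGroup E] [InnerProductSpace ℝ E] [CompleteSpace E]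
    {u v : Ω → E} (hu : MemLp u 2 μ) (hv : MemLp v 2 μ) (hvm : StronglyMeasurable[m] v) :
    ∫ ω, ⟪(μ[u|m]) ω, v ω⟫ ∂μ = ∫ ω, ⟪u ω, v ω⟫ ∂μ := by
  have h : μ[fun ω => ⟪u ω, v ω⟫|m] =ᵐ[μ] fun ω => ⟪(μ[u|m]) ω, v ω⟫ :=
    condExp_bilin_of_stronglyMeasurable_right (innerSL ℝ) hvm
      (aux_inner_int hu hv) (hu.integrable (by norm_num))
  rw [← integral_congr_ae h, integral_condExp hm]

lemma aux_bound {Ω E : Type*} {m m0 : MeasurableSpace Ω} {μ : Measure Ω}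
    [IsProbabilityMeasure μ]
    [NormedAddCommGroup E] [InnerProductSpace ℝ E] [CompleteSpace E]
    {u : Ω → E} (hu : MemLp u 2 μ) {ξ : ℝ} (hξ : 0 < ξ)
    (h : ∀ᵐ ω ∂μ, (μ[fun ω' => ‖u ω'‖ ^ 2|m]) ω ≤ ξ ^ 2) :
    ∀ᵐ ω ∂μ, ‖(μ[u|m]) ω‖ ≤ ξ := by
  have h2 := Integrable.norm_condExp_rpow_le (m := m) (μ := μ) (f := u) (p := 2) (by norm_num)
    (by simpa using hu.integrable_norm_pow (by norm_num))
  filter_upwards [h, h2] with ω h1 h2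
  simp only [Real.rpow_ofNat] at h2
  exact (sq_le_sq₀ (norm_nonneg _) hξ.le).1 (h2.trans h1)

lemma aux_sq {Ω E : Type*} {m m0 : MeasurableSpace Ω} (hm : m ≤ m0) {μ : Measure Ω}
    [IsProbabilityMeasure μ]
    [NormedAddCommGroup E] [InnerProductSpace ℝ E] 
    {u : Ω → E} {ξ : ℝ} 
    (h : ∀ᵐ ω ∂μ, (μ[fun ω' => ‖u ω'‖ ^ 2|m]) ω ≤ ξ ^ 2) :
    ∫ ω, ‖u ω‖ ^ 2 ∂μ ≤ ξ ^ 2 := by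
  rw [← integral_condExp hm]
  calc _ ≤ ∫ ω, ξ ^ 2 ∂μ := integral_mono_ae integrable_condExp (integrable_const _) h
    _ = _ := by simp

/-- dual averaging regret -/
lemma aux_regret {E : Type*} [NormedAddCommGroup E] [InnerProductSpace ℝ E]
    {X : Set E} {ψ : E → ℝ} (hψ : StrongConvexOn X 1 ψ) (hψ0 : ∀ x ∈ X, 0 ≤ ψ x) (K : ℕ)
    {η : ℕ → ℝ} (hηpos : ∀ k ≤ K, 0 < η k) (hηmono : ∀ k < K, η (k + 1) ≤ η k)
    {z g y : ℕ → E} (hz1 : z 1 = 0) (hz : ∀ k ∈ Icc 1 K, z (k + 1) = z k + g k)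
    (hymem : ∀ k ∈ Icc 1 K, y k ∈ X)
    (hymin : ∀ k ∈ Icc 1 K, ∀ w ∈ X, ⟪z k, y k⟫ + ψ (y k) / η k ≤ ⟪z k, w⟫ + ψ w / η k) :
    ∀ k, 1 ≤ k → k ≤ K → ∀ w ∈ X,
      ∑ l ∈ Icc 1 k, (⟪g l, y l⟫ - η l / 2 * ‖g l‖ ^ 2) ≤ ⟪z (k + 1), w⟫ + ψ w / η k := by
  have step : ∀ k ∈ Icc 1 K, ∀ w ∈ X,
      ⟪z k, y k⟫ + ψ (y k) / η k + (⟪g k, y k⟫ - η k / 2 * ‖g k‖ ^ 2)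
        ≤ ⟪z (k + 1), w⟫ + ψ w / η k := by
    intro k hk w hw
    have hηk := hηpos k (mem_Icc.1 hk).2
    have h1 := aux_strong hψ hηk (hymem k hk) (hymin k hk) w hw
    rw [hz k hk, inner_add_left]
    have h2 : -(‖g k‖ * ‖w - y k‖) ≤ ⟪g k, w⟫ - ⟪g k, y k⟫ := by
      rw [← inner_sub_right]
      exact neg_le_of_abs_le (abs_real_inner_le_norm _ _)
    have h3 : ‖g k‖ * ‖w - y k‖ ≤ η k / 2 * ‖g k‖ ^ 2 + ‖w - y k‖ ^ 2 / (2 * η k) := by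
      have : η k / 2 * ‖g k‖ ^ 2 + ‖w - y k‖ ^ 2 / (2 * η k) - ‖g k‖ * ‖w - y k‖
        = (η k * ‖g k‖ - ‖w - y k‖) ^ 2 / (2 * η k) := by field_simp; ring
      have h4 : 0 ≤ (η k * ‖g k‖ - ‖w - y k‖) ^ 2 / (2 * η k) := by positivity
      linarith
    linarith
  intro k hk
  induction k, hk using Nat.le_induction with
  | base =>
    intro hK w hw
    have h1 : 1 ∈ Icc 1 K := by simp [hK]
    have h := step 1 h1 w hw
    have h0 : 0 ≤ ψ (y 1) / η 1 := div_nonneg (hψ0 _ (hymem 1 h1)) (hηpos 1 hK).le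
    rw [hz1, inner_zero_left] at h
    simp only [Icc_self, sum_singleton]
    linarith
  | succ k hk ih =>
    intro hK w hw
    have hk1 : k + 1 ∈ Icc 1 K := by simp [hK]
    have h := step (k + 1) hk1 w hw
    have hi := ih (by omega) _ (hymem _ hk1)
    rw [sum_Icc_succ_top (by omega)]
    have h2 : ψ (y (k + 1)) / η k ≤ ψ (y (k + 1)) / η (k + 1) :=
      div_le_div_of_nonneg_left (hψ0 _ (hymem _ hk1)) (hηpos _ hK) (hηmono k (by omega))
    linarith

lemma aux_sm_smul {Ω E : Type*} {m : MeasurableSpace Ω} [NormedAddCommGroup E] [NormedSpace ℝ E]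
    {u : Ω → E} (hu : StronglyMeasurable[m] u) (c : ℝ) :
    StronglyMeasurable[m] (fun ω => c • u ω) := StronglyMeasurable.const_smul hu c

lemma aux_lp_smul {Ω E : Type*} {m : MeasurableSpace Ω} {μ : Measure Ω} [NormedAddCommGroup E]
    [NormedSpace ℝ E] {u : Ω → E} (hu : MemLp u 2 μ) (c : ℝ) :
    MemLp (fun ω => c • u ω) 2 μ := MemLp.const_smul hu c

/-- Expected suboptimality gap of DLMD-DiffEx in terms of the expected consensus errors,
for conditionally unbiased effective stochastic subgradients with conditional second
moment at most `ξ²`. -/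
theorem stmt_15 {Ωs : Type*} {m0 : MeasurableSpace Ωs}
    (μpr : Measure Ωs) [IsProbabilityMeasure μpr] (F : Filtration ℕ m0)
    (d n K : ℕ) (hd : 0 < d) (hn : 0 < n) (hK : 0 < K)
    (X : Set (EuclideanSpace ℝ (Fin d))) (hXc : IsClosed X) (hXconv : Convex ℝ X)
    (h0X : (0 : EuclideanSpace ℝ (Fin d)) ∈ X)
    (ψ : EuclideanSpace ℝ (Fin d) → ℝ) (hψ : StrongConvexOn X 1 ψ)
    (hψnonneg : ∀ x ∈ X, 0 ≤ ψ x) (hψ0 : ψ 0 = 0)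
    (f : Fin n → EuclideanSpace ℝ (Fin d) → ℝ)
    (hfconv : ∀ i, ConvexOn ℝ X (f i))
    (L : ℝ) (hL : 0 < L)
    (hLip : ∀ i, ∀ x ∈ X, ∀ y ∈ X, |f i x - f i y| ≤ L * ‖x - y‖)
    (fbar : EuclideanSpace ℝ (Fin d) → ℝ)
    (hfbar : ∀ x, fbar x = (n : ℝ)⁻¹ * ∑ i : Fin n, f i x)
    (η : ℕ → ℝ) (hηpos : ∀ k ≤ K, 0 < η k) (hηmono : ∀ k < K, η (k + 1) ≤ η k)
    (W : ℕ → Matrix (Fin n) (Fin n) ℝ)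
    (hWnonneg : ∀ k ∈ Icc 1 K, ∀ i j, 0 ≤ W k i j)
    (hWrow : ∀ k ∈ Icc 1 K, ∀ i, ∑ j, W k i j = 1)
    (hWcol : ∀ k ∈ Icc 1 K, ∀ j, ∑ i, W k i j = 1)
    (z ghat : Fin n → ℕ → Ωs → EuclideanSpace ℝ (Fin d))
    (hz1 : ∀ i ω, z i 1 ω = 0)
    (hgmeas : ∀ i k, StronglyMeasurable[F k] (ghat i k))
    (hgL2 : ∀ i k, MemLp (ghat i k) 2 μpr)
    (hrec : ∀ i, ∀ k ∈ Icc 1 K, ∀ ω,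
      z i (k + 1) ω = (∑ j : Fin n, W k i j • z j k ω) + ghat i k ω)
    (zbar : ℕ → Ωs → EuclideanSpace ℝ (Fin d))
    (hzbar : ∀ k ω, zbar k ω = (n : ℝ)⁻¹ • ∑ j : Fin n, z j k ω)
    (x : Fin n → ℕ → Ωs → EuclideanSpace ℝ (Fin d))
    (hxmem : ∀ i, ∀ k ∈ Icc 1 K, ∀ ω, x i k ω ∈ X)
    (hxmin : ∀ i, ∀ k ∈ Icc 1 K, ∀ ω, ∀ w ∈ X,
      ⟪z i k ω, x i k ω⟫ + ψ (x i k ω) / η k ≤ ⟪z i k ω, w⟫ + ψ w / η k)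
    (y : ℕ → Ωs → EuclideanSpace ℝ (Fin d))
    (hymem : ∀ k ∈ Icc 1 K, ∀ ω, y k ω ∈ X)
    (hymin : ∀ k ∈ Icc 1 K, ∀ ω, ∀ w ∈ X,
      ⟪zbar k ω, y k ω⟫ + ψ (y k ω) / η k ≤ ⟪zbar k ω, w⟫ + ψ w / η k)
    (ξ : ℝ) (hξ : 0 < ξ)
    (hsubgrad : ∀ i, ∀ k ∈ Icc 1 K, ∀ᵐ ω ∂μpr, ∀ w ∈ X,
      f i (x i k ω) + ⟪(μpr[ghat i k|F (k - 1)]) ω, w - x i k ω⟫ ≤ f i w)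
    (hsecond : ∀ i, ∀ k ∈ Icc 1 K, ∀ᵐ ω ∂μpr,
      (μpr[fun ω' => ‖ghat i k ω'‖ ^ 2|F (k - 1)]) ω ≤ ξ ^ 2) :
    ∀ xstar ∈ X, ∀ i : Fin n,
      (∫ ω, fbar ((K : ℝ)⁻¹ • ∑ k ∈ Icc 1 K, x i k ω) ∂μpr) - fbar xstar
        ≤ ψ xstar / (K * η K)
          + ξ ^ 2 / (2 * K) * ∑ k ∈ Icc 1 K, η (k - 1)
          + (L + ξ) / (n * K) *
              ∑ k ∈ Icc 1 K, ∑ j : Fin n, η k * ∫ ω, ‖zbar k ω - z j k ω‖ ∂μpr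
          + L / K * ∑ k ∈ Icc 1 K, η k * ∫ ω, ‖zbar k ω - z i k ω‖ ∂μpr := by
  intro xstar hxs i
  have hn0 : (0 : ℝ) < n := by exact_mod_cast hn
  have hK0 : (0 : ℝ) < K := by exact_mod_cast hK
  have hmemk : ∀ k ∈ Icc 1 K, 1 ≤ k ∧ k ≤ K := fun k hk => mem_Icc.1 hk
  have hz : ∀ k, 1 ≤ k → k ≤ K → ∀ j,
      StronglyMeasurable[F (k - 1)] (z j k) ∧ MemLp (z j k) 2 μpr := by
    intro k hk
    induction k, hk using Nat.le_induction with
    | base =>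
      intro _ j
      have : z j 1 = fun _ => 0 := funext (hz1 j)
      rw [this]
      exact ⟨stronglyMeasurable_const, memLp_const _⟩
    | succ k hk ih =>
      intro hkK j
      have ih' := ih (by omega)
      have : z j (k + 1) = fun ω => (∑ l : Fin n, W k j l • z l k ω) + ghat j k ω :=
        funext (hrec j k (mem_Icc.2 ⟨hk, by omega⟩))
      rw [this, Nat.add_sub_cancel]
      refine ⟨?_, ?_⟩
      · refine StronglyMeasurable.add ?_ (hgmeas j k)
        refine Finset.stronglyMeasurable_fun_sum _ fun l _ => ?_
        exact aux_sm_smul ((ih' l).1.mono (F.mono (Nat.sub_le _ _))) _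
      · refine MemLp.add ?_ (hgL2 j k)
        refine memLp_finsetSum _ fun l _ => ?_
        exact aux_lp_smul (ih' l).2 _
  have hzb : ∀ k ∈ Icc 1 K,
      StronglyMeasurable[F (k - 1)] (zbar k) ∧ MemLp (zbar k) 2 μpr := by
    intro k hk
    have h1 := hz k (hmemk k hk).1 (hmemk k hk).2
    rw [show zbar k = fun ω => (n : ℝ)⁻¹ • ∑ j : Fin n, z j k ω from funext (hzbar k)]
    refine ⟨?_, ?_⟩
    · refine aux_sm_smul ?_ _
      exact Finset.stronglyMeasurable_fun_sum _ fun l _ => (h1 l).1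
    · refine aux_lp_smul ?_ _
      exact memLp_finsetSum _ fun l _ => (h1 l).2
  have hη : ∀ k ∈ Icc 1 K, 0 < η k := fun k hk => hηpos k (hmemk k hk).2
  have hxm : ∀ j, ∀ k ∈ Icc 1 K, StronglyMeasurable[F (k - 1)] (x j k) ∧ MemLp (x j k) 2 μpr := by
    intro j k hk
    have h1 := hz k (hmemk k hk).1 (hmemk k hk).2 j
    have h2 : ∀ a b, ‖x j k a - x j k b‖ ≤ η k * ‖z j k a - z j k b‖ := fun a b =>
      aux_lip hψ (hη k hk) (hxmem j k hk a) (hxmin j k hk a) (hxmem j k hk b) (hxmin j k hk b)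
    exact ⟨aux_meas _ h2 h1.1, aux_memLp _ h2 (h1.1.mono (F.le _)) h1.2⟩
  have hym : ∀ k ∈ Icc 1 K, StronglyMeasurable[F (k - 1)] (y k) ∧ MemLp (y k) 2 μpr := by
    intro k hk
    have h1 := hzb k hk
    have h2 : ∀ a b, ‖y k a - y k b‖ ≤ η k * ‖zbar k a - zbar k b‖ := fun a b =>
      aux_lip hψ (hη k hk) (hymem k hk a) (hymin k hk a) (hymem k hk b) (hymin k hk b)
    exact ⟨aux_meas _ h2 h1.1, aux_memLp _ h2 (h1.1.mono (F.le _)) h1.2⟩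
  have hxy : ∀ j, ∀ k ∈ Icc 1 K, ∀ ω, ‖y k ω - x j k ω‖ ≤ η k * ‖zbar k ω - z j k ω‖ :=
    fun j k hk ω =>
      aux_lip hψ (hη k hk) (hymem k hk ω) (hymin k hk ω) (hxmem j k hk ω) (hxmin j k hk ω)
  have hcons : ∀ j, ∀ k ∈ Icc 1 K, Integrable (fun ω => ‖zbar k ω - z j k ω‖) μpr := by
    intro j k hk
    exact (((hzb k hk).2.sub (hz k (hmemk k hk).1 (hmemk k hk).2 j).2).integrable
      (by norm_num)).norm
  -- properties of the average objective
  have hfbL : ∀ u ∈ X, ∀ v ∈ X, |fbar u - fbar v| ≤ L * ‖u - v‖ := by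
    intro u hu v hv
    rw [hfbar, hfbar, ← mul_sub, ← sum_sub_distrib, abs_mul, abs_of_pos (inv_pos.2 hn0),
      inv_mul_le_iff₀ hn0]
    calc _ ≤ ∑ j : Fin n, |f j u - f j v| := abs_sum_le_sum_abs _ _
      _ ≤ ∑ j : Fin n, L * ‖u - v‖ := sum_le_sum fun j _ => hLip j u hu v hv
      _ = _ := by simp
  have hfbC : ConvexOn ℝ X fbar := by
    refine ⟨hXconv, fun u hu v hv a b ha hb hab => ?_⟩
    rw [hfbar, hfbar, hfbar, smul_eq_mul, smul_eq_mul]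
    calc _ ≤ (n : ℝ)⁻¹ * ∑ j : Fin n, (a * f j u + b * f j v) := by
          gcongr with j _
          exact (hfconv j).2 hu hv ha hb hab
      _ = _ := by rw [sum_add_distrib, ← mul_sum, ← mul_sum]; ring
  have hfint : ∀ v : Ωs → EuclideanSpace ℝ (Fin d), (∀ ω, v ω ∈ X) → StronglyMeasurable v →
      MemLp v 2 μpr → Integrable (fun ω => fbar (v ω)) μpr := by
    intro v hvX hv hv2
    exact (aux_memLp (u := fun ω => fbar (v ω)) L
      (fun a b => hfbL _ (hvX a) _ (hvX b)) hv hv2).integrable (by norm_num)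
  have hfx : ∀ k ∈ Icc 1 K, Integrable (fun ω => fbar (x i k ω)) μpr := fun k hk =>
    hfint _ (hxmem i k hk) ((hxm i k hk).1.mono (F.le _)) (hxm i k hk).2
  have hw1 : ∑ k ∈ Icc 1 K, (K : ℝ)⁻¹ = 1 := by simp [hK0.ne']
  have hwX : ∀ ω, (K : ℝ)⁻¹ • ∑ k ∈ Icc 1 K, x i k ω ∈ X := by
    intro ω
    rw [smul_sum]
    exact hXconv.sum_mem (fun _ _ => (inv_pos.2 hK0).le) hw1 fun k hk => hxmem i k hk ω
  have havg : ∫ ω, fbar ((K : ℝ)⁻¹ • ∑ k ∈ Icc 1 K, x i k ω) ∂μpr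
      ≤ ∑ k ∈ Icc 1 K, (K : ℝ)⁻¹ * ∫ ω, fbar (x i k ω) ∂μpr := by
    have hr : ∑ k ∈ Icc 1 K, (K : ℝ)⁻¹ * ∫ ω, fbar (x i k ω) ∂μpr
        = ∫ ω, ∑ k ∈ Icc 1 K, (K : ℝ)⁻¹ * fbar (x i k ω) ∂μpr := by
      rw [integral_finsetSum _ fun k hk => (hfx k hk).const_mul _]
      simp_rw [integral_const_mul]
    rw [hr]
    refine integral_mono (hfint _ hwX ?_ ?_) ?_ ?_
    · refine aux_sm_smul ?_ _
      exact Finset.stronglyMeasurable_fun_sum _ fun k hk => (hxm i k hk).1.mono (F.le _)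
    · refine aux_lp_smul ?_ _
      exact memLp_finsetSum _ fun k hk => (hxm i k hk).2
    · exact integrable_finsetSum _ fun k hk => (hfx k hk).const_mul _
    · intro ω
      simp only
      rw [smul_sum]
      exact hfbC.map_sum_le (fun _ _ => (inv_pos.2 hK0).le) hw1 fun k hk => hxmem i k hk ω
  -- per-round bound
  have hdiff : ∀ k ∈ Icc 1 K, MemLp (fun ω => y k ω - xstar) 2 μpr := fun k hk =>
    (hym k hk).2.sub (memLp_const _)
  have hround : ∀ k ∈ Icc 1 K, (∫ ω, fbar (x i k ω) ∂μpr) - fbar xstar ≤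
      L * (η k * ∫ ω, ‖zbar k ω - z i k ω‖ ∂μpr) +
      (n : ℝ)⁻¹ * ∑ j : Fin n, ((L + ξ) * (η k * ∫ ω, ‖zbar k ω - z j k ω‖ ∂μpr)
        + ∫ ω, ⟪ghat j k ω, y k ω - xstar⟫ ∂μpr) := by
    intro k hk
    have hI : ∀ j, Integrable
        (fun ω => ⟪(μpr[ghat j k|F (k - 1)]) ω, y k ω - xstar⟫) μpr := fun j =>
      aux_inner_int ((hgL2 j k).condExp (by norm_num)) (hdiff k hk)
    have hI1 : ∀ j, Integrable (fun ω => (L + ξ) * (η k * ‖zbar k ω - z j k ω‖)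
        + ⟪(μpr[ghat j k|F (k - 1)]) ω, y k ω - xstar⟫) μpr := fun j =>
      (((hcons j k hk).const_mul _).const_mul _).add (hI j)
    have hI2 : Integrable (fun ω => (n : ℝ)⁻¹ * ∑ j : Fin n,
        ((L + ξ) * (η k * ‖zbar k ω - z j k ω‖)
          + ⟪(μpr[ghat j k|F (k - 1)]) ω, y k ω - xstar⟫)) μpr :=
      (integrable_finsetSum _ fun j _ => hI1 j).const_mul _
    have hI3 : Integrable (fun ω => L * (η k * ‖zbar k ω - z i k ω‖)) μpr :=
      ((hcons i k hk).const_mul _).const_mul _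
    have hr : L * (η k * ∫ ω, ‖zbar k ω - z i k ω‖ ∂μpr) +
      (n : ℝ)⁻¹ * ∑ j : Fin n, ((L + ξ) * (η k * ∫ ω, ‖zbar k ω - z j k ω‖ ∂μpr)
        + ∫ ω, ⟪ghat j k ω, y k ω - xstar⟫ ∂μpr)
      = ∫ ω, (L * (η k * ‖zbar k ω - z i k ω‖) + (n : ℝ)⁻¹ * ∑ j : Fin n,
        ((L + ξ) * (η k * ‖zbar k ω - z j k ω‖)
          + ⟪(μpr[ghat j k|F (k - 1)]) ω, y k ω - xstar⟫)) ∂μpr := by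
      rw [integral_add hI3 hI2, integral_const_mul, integral_const_mul, integral_const_mul,
        integral_finsetSum _ fun j _ => hI1 j]
      congr 2
      refine sum_congr rfl fun j _ => ?_
      rw [integral_add (((hcons j k hk).const_mul _).const_mul _) (hI j), integral_const_mul,
        integral_const_mul, aux_pull (F.le _) (hgL2 j k) (hdiff k hk)
          ((hym k hk).1.sub stronglyMeasurable_const)]
    rw [hr]
    have hl : (∫ ω, fbar (x i k ω) ∂μpr) - fbar xstar
        = ∫ ω, (fbar (x i k ω) - fbar xstar) ∂μpr := by
      rw [integral_sub (hfx k hk) (integrable_const _)]; simp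
    rw [hl]
    refine integral_mono_ae ((hfx k hk).sub (integrable_const _)) (hI3.add hI2) ?_
    have hsub := ae_all_iff.2 fun j => hsubgrad j k hk
    have hbd := ae_all_iff.2 fun j => aux_bound (hgL2 j k) hξ (hsecond j k hk)
    filter_upwards [hsub, hbd] with ω h1 h2
    have e1 : fbar (x i k ω) - fbar (y k ω) ≤ L * (η k * ‖zbar k ω - z i k ω‖) := by
      refine (le_abs_self _).trans ((hfbL _ (hxmem i k hk ω) _ (hymem k hk ω)).trans ?_)
      rw [norm_sub_rev]
      exact mul_le_mul_of_nonneg_left (hxy i k hk ω) hL.le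
    have e2 : fbar (y k ω) - fbar xstar ≤ (n : ℝ)⁻¹ * ∑ j : Fin n,
        ((L + ξ) * (η k * ‖zbar k ω - z j k ω‖)
          + ⟪(μpr[ghat j k|F (k - 1)]) ω, y k ω - xstar⟫) := by
      rw [hfbar, hfbar, ← mul_sub, ← sum_sub_distrib]
      gcongr with j _
      have a1 := h1 j xstar hxs
      have a2 := (le_abs_self _).trans (hLip j _ (hymem k hk ω) _ (hxmem j k hk ω))
      have a3 := hxy j k hk ω
      have a4 : ⟪(μpr[ghat j k|F (k - 1)]) ω, xstar - x j k ω⟫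
          = ⟪(μpr[ghat j k|F (k - 1)]) ω, y k ω - x j k ω⟫
            - ⟪(μpr[ghat j k|F (k - 1)]) ω, y k ω - xstar⟫ := by
        rw [← inner_sub_right]; congr 1; abel
      have a5 : -(ξ * ‖y k ω - x j k ω‖) ≤ ⟪(μpr[ghat j k|F (k - 1)]) ω, y k ω - x j k ω⟫ := by
        refine le_trans ?_ (neg_le_of_abs_le (abs_real_inner_le_norm _ _))
        exact neg_le_neg (mul_le_mul_of_nonneg_right (h2 j) (norm_nonneg _))
      have a6 : (L + ξ) * ‖y k ω - x j k ω‖ ≤ (L + ξ) * (η k * ‖zbar k ω - z j k ω‖) :=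
        mul_le_mul_of_nonneg_left a3 (by positivity)
      linarith
    change fbar (x i k ω) - fbar xstar ≤ L * (η k * ‖zbar k ω - z i k ω‖) + (n : ℝ)⁻¹ * ∑ j : Fin n,
        ((L + ξ) * (η k * ‖zbar k ω - z j k ω‖)
          + ⟪(μpr[ghat j k|F (k - 1)]) ω, y k ω - xstar⟫)
    linarith
  -- regret
  have hreg : ∑ k ∈ Icc 1 K, (n : ℝ)⁻¹ * ∑ j : Fin n, ∫ ω, ⟪ghat j k ω, y k ω - xstar⟫ ∂μpr
      ≤ ψ xstar / η K + ξ ^ 2 / 2 * ∑ k ∈ Icc 1 K, η (k - 1) := by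
    have hIg : ∀ k ∈ Icc 1 K, ∀ j, Integrable (fun ω => ⟪ghat j k ω, y k ω - xstar⟫) μpr :=
      fun k hk j => aux_inner_int (hgL2 j k) (hdiff k hk)
    have hI2 : ∀ k ∈ Icc 1 K, Integrable
        (fun ω => (n : ℝ)⁻¹ * ∑ j : Fin n, ⟪ghat j k ω, y k ω - xstar⟫) μpr := fun k hk =>
      (integrable_finsetSum _ fun j _ => hIg k hk j).const_mul _
    have hIs : ∀ k j, Integrable (fun ω => ‖ghat j k ω‖ ^ 2) μpr := fun k j =>
      (hgL2 j k).integrable_norm_pow (by norm_num)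
    have hI3 : ∀ k, Integrable
        (fun ω => η k / 2 * ((n : ℝ)⁻¹ * ∑ j : Fin n, ‖ghat j k ω‖ ^ 2)) μpr := fun k =>
      ((integrable_finsetSum _ fun j _ => hIs k j).const_mul _).const_mul _
    have hl : ∑ k ∈ Icc 1 K, (n : ℝ)⁻¹ * ∑ j : Fin n, ∫ ω, ⟪ghat j k ω, y k ω - xstar⟫ ∂μpr
        = ∫ ω, ∑ k ∈ Icc 1 K, (n : ℝ)⁻¹ * ∑ j : Fin n, ⟪ghat j k ω, y k ω - xstar⟫ ∂μpr := by
      rw [integral_finsetSum _ hI2]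
      refine sum_congr rfl fun k hk => ?_
      rw [integral_const_mul, integral_finsetSum _ fun j _ => hIg k hk j]
    have hpt : ∀ ω, ∑ k ∈ Icc 1 K, (n : ℝ)⁻¹ * ∑ j : Fin n, ⟪ghat j k ω, y k ω - xstar⟫
        ≤ ψ xstar / η K
          + ∑ k ∈ Icc 1 K, η k / 2 * ((n : ℝ)⁻¹ * ∑ j : Fin n, ‖ghat j k ω‖ ^ 2) := by
      intro ω
      set gb : ℕ → EuclideanSpace ℝ (Fin d) := fun k => (n : ℝ)⁻¹ • ∑ j : Fin n, ghat j k ω with hgb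
      have hzstep : ∀ k ∈ Icc 1 K, zbar (k + 1) ω = zbar k ω + gb k := by
        intro k hk
        rw [hzbar, hzbar, hgb, ← smul_add]
        congr 1
        rw [sum_congr rfl fun j _ => hrec j k hk ω, sum_add_distrib, sum_comm]
        congr 1
        refine sum_congr rfl fun j _ => ?_
        rw [← sum_smul, hWcol k hk j, one_smul]
      have hzb1 : zbar 1 ω = 0 := by rw [hzbar]; simp [hz1]
      have hr := aux_regret hψ hψnonneg K hηpos hηmono (z := fun k => zbar k ω) (g := gb)
        (y := fun k => y k ω) hzb1 hzstep (fun k hk => hymem k hk ω)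
        (fun k hk => hymin k hk ω) K hK le_rfl xstar hxs
      have hzsum : ∀ k, k ≤ K → zbar (k + 1) ω = ∑ l ∈ Icc 1 k, gb l := by
        intro k
        induction k with
        | zero => intro _; simpa using hzb1
        | succ k ih =>
          intro hk
          rw [hzstep (k + 1) (by simp [hk]), ih (by omega), sum_Icc_succ_top (by omega)]
      simp only [hzsum K le_rfl, sum_inner, sum_sub_distrib] at hr
      have hgbi : ∀ k, (n : ℝ)⁻¹ * ∑ j : Fin n, ⟪ghat j k ω, y k ω - xstar⟫
          = ⟪gb k, y k ω⟫ - ⟪gb k, xstar⟫ := by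
        intro k
        rw [← inner_sub_right, hgb, real_inner_smul_left, sum_inner]
      have hgbn : ∀ k, ‖gb k‖ ^ 2 ≤ (n : ℝ)⁻¹ * ∑ j : Fin n, ‖ghat j k ω‖ ^ 2 := by
        intro k
        rw [hgb]
        simp only
        rw [norm_smul, mul_pow, norm_inv, Real.norm_natCast]
        have h1 : ‖∑ j : Fin n, ghat j k ω‖ ^ 2 ≤ (∑ j : Fin n, ‖ghat j k ω‖) ^ 2 := by
          gcongr; exact norm_sum_le _ _
        have h2 : (∑ j : Fin n, ‖ghat j k ω‖) ^ 2 ≤ n * ∑ j : Fin n, ‖ghat j k ω‖ ^ 2 := by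
          simpa using sq_sum_le_card_mul_sum_sq (s := univ) (f := fun j : Fin n => ‖ghat j k ω‖)
        calc _ ≤ ((n : ℝ)⁻¹) ^ 2 * (n * ∑ j : Fin n, ‖ghat j k ω‖ ^ 2) := by
              gcongr; exact h1.trans h2
          _ = _ := by field_simp
      have hs : ∑ k ∈ Icc 1 K, η k / 2 * ‖gb k‖ ^ 2
          ≤ ∑ k ∈ Icc 1 K, η k / 2 * ((n : ℝ)⁻¹ * ∑ j : Fin n, ‖ghat j k ω‖ ^ 2) :=
        sum_le_sum fun k hk => mul_le_mul_of_nonneg_left (hgbn k) (half_pos (hη k hk)).le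
      rw [sum_congr rfl fun k _ => hgbi k, sum_sub_distrib]
      linarith
    rw [hl]
    have hi := integral_mono (μ := μpr) (integrable_finsetSum _ hI2)
      ((integrable_const (ψ xstar / η K)).add (integrable_finsetSum (Icc 1 K) fun k _ => hI3 k)) hpt
    refine hi.trans ?_
    simp only [Pi.add_apply]
    rw [integral_add (integrable_const _) (integrable_finsetSum (Icc 1 K) fun k _ => hI3 k),
      integral_finsetSum _ fun k _ => hI3 k, mul_sum]
    simp only [integral_const, probReal_univ, one_smul]
    gcongr with k hk
    rw [integral_const_mul, integral_const_mul, integral_finsetSum _ fun j _ => hIs k j]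
    have h1 : ∑ j : Fin n, ∫ ω, ‖ghat j k ω‖ ^ 2 ∂μpr ≤ ∑ j : Fin n, ξ ^ 2 :=
      sum_le_sum fun j _ => aux_sq (F.le _) (hsecond j k hk)
    have h2 : (n : ℝ)⁻¹ * ∑ j : Fin n, ∫ ω, ‖ghat j k ω‖ ^ 2 ∂μpr ≤ ξ ^ 2 := by
      rw [inv_mul_le_iff₀ hn0]
      simpa using h1
    have h3 : η k ≤ η (k - 1) := by
      have := hηmono (k - 1) (by have := hmemk k hk; omega)
      rwa [Nat.sub_add_cancel (hmemk k hk).1] at this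
    have h4 := hη k hk
    calc _ ≤ η k / 2 * ξ ^ 2 := mul_le_mul_of_nonneg_left h2 (by positivity)
      _ ≤ η (k - 1) / 2 * ξ ^ 2 := by gcongr
      _ = _ := by ring
  -- conclusion
  have hsum := sum_le_sum hround
  rw [sum_sub_distrib, sum_add_distrib, ← mul_sum] at hsum
  simp only [sum_add_distrib, mul_add, sum_const, Nat.card_Icc, Nat.add_sub_cancel,
    nsmul_eq_mul, ← mul_sum] at hsum hreg havg
  simp only [← mul_sum]
  have hKey : (K : ℝ) * ((∫ ω, fbar ((K : ℝ)⁻¹ • ∑ k ∈ Icc 1 K, x i k ω) ∂μpr) - fbar xstar)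
      ≤ ∑ k ∈ Icc 1 K, (∫ ω, fbar (x i k ω) ∂μpr) - K * fbar xstar := by
    rw [mul_sub]
    have := mul_le_mul_of_nonneg_left havg hK0.le
    rw [mul_inv_cancel_left₀ hK0.ne'] at this
    linarith
  refine le_of_mul_le_mul_left ?_ hK0
  have hE : ∀ A B C D : ℝ, (K : ℝ) * (ψ xstar / (K * η K) + ξ ^ 2 / (2 * K) * B
      + (L + ξ) / (n * K) * C + L / K * D)
      = ψ xstar / η K + ξ ^ 2 / 2 * B + (n : ℝ)⁻¹ * ((L + ξ) * C) + L * D := by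
    intro A B C D
    have := hηpos K le_rfl
    field_simp
  rw [hE 0]
  linarith
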